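/- Let α be a type and A, B lists over α. Then for every q ≥ 2 and every t ≥ 0, one has S_{A,B}(2^t · q) = S(q) ⊕ S(a(q))^t, where S(a(q))^t denotes the concatenation of t copies of S(a(q)). -/

import Mathlib

/-- Stern's diatomic sequence. -/
def stern : ℕ → ℕ
  | 0 => 0
  | 1 => 1
  | n + 2 =>
    if (n + 2) % 2 = 0 then stern ((n + 2) / 2)
    else stern ((n + 2) / 2) + stern ((n + 2) / 2 + 1)
decreasing_by all_goals omega

/-- OEIS A003602: a(1)=1, a(2n)=a(n), a(2n+1)=n+1. (a(0)=0 as junk value.) -/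
def aseq : ℕ → ℕ
  | 0 => 0
  | 1 => 1
  | n + 2 =>
    if (n + 2) % 2 = 0 then aseq ((n + 2) / 2)
    else (n + 2) / 2 + 1
decreasing_by all_goals omega

-- the modified sequence `a*`: zero at powers of two.
open Classical in
noncomputable def aStar (j : ℕ) : ℕ :=
  if ∃ k, j = 2 ^ k then 0 else aseq j

theorem aseq_le (n : ℕ) : aseq n ≤ n := by
  induction n using Nat.strong_induction_on with
  | _ n ih =>
    match n with
    | 0 => simp [aseq]
    | 1 => simp [aseq]
    | m + 2 =>
      rw [aseq]
      split
      · exact le_trans (ih ((m + 2) / 2) (by omega)) (by omega)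
      · omega

theorem aStar_le (j : ℕ) : aStar j ≤ j := by
  unfold aStar
  split
  · omega
  · exact aseq_le j

/-- The Markov-type sequence `S_{A,B}(n)`. -/
noncomputable def mseq {α : Type*} (A B : List α) : ℕ → List α
  | 0 => A
  | 1 => B
  | 2 => A ++ B
  | n + 3 =>
    if (n + 3) % 2 = 0 then
      mseq A B ((n + 3) / 2) ++ mseq A B (aseq ((n + 3) / 2))
    else
      mseq A B (aStar ((n + 4) / 2 - 1)) ++ mseq A B ((n + 4) / 2)
decreasing_by
  all_goals first
    | omega
    | exact lt_of_le_of_lt (aseq_le _) (by omega)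
    | exact lt_of_le_of_lt (aStar_le _) (by omega)

theorem aseq_two_mul (n : ℕ) : aseq (2 * n) = aseq n := by
  cases n with
  | zero => rfl
  | succ m =>
    rw [show 2 * (m + 1) = 2 * m + 2 by ring, aseq, if_pos (by omega),
      show (2 * m + 2) / 2 = m + 1 by omega]

theorem aseq_two_pow_mul (t n : ℕ) : aseq (2 ^ t * n) = aseq n := by
  induction t with
  | zero => rw [pow_zero, one_mul]
  | succ t ih => rw [pow_succ', mul_assoc, aseq_two_mul, ih]

theorem mseq_two_mul {α : Type*} (A B : List α) {n : ℕ} (hn : 2 ≤ n) :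
    mseq A B (2 * n) = mseq A B n ++ mseq A B (aseq n) := by
  obtain ⟨m, rfl⟩ := Nat.exists_eq_add_of_le' hn
  rw [show 2 * (m + 2) = (2 * m + 1) + 3 by ring, mseq, if_pos (by omega),
    show (2 * m + 1 + 3) / 2 = m + 2 by omega]

/-- for every `q ≥ 2` and `t ≥ 0`,
`S_{A,B}(2^t · q) = S(q) ⊕ S(a(q))^t`. -/
theorem stmt13 {α : Type*} (A B : List α) (q t : ℕ) (hq : 2 ≤ q) :
    mseq A B (2 ^ t * q) =
      mseq A B q ++ (List.replicate t (mseq A B (aseq q))).flatten := by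
  induction t with
  | zero => simp
  | succ t ih =>
    have two_le : 2 ≤ 2 ^ t * q := hq.trans (Nat.le_mul_of_pos_left q (Nat.two_pow_pos t))
    calc
      mseq A B (2 ^ (t + 1) * q) = mseq A B (2 * (2 ^ t * q)) := by rw [pow_succ', mul_assoc]
      _ = mseq A B (2 ^ t * q) ++ mseq A B (aseq q) := by
        rw [mseq_two_mul A B two_le, aseq_two_pow_mul]
      _ = mseq A B q ++ (List.replicate (t + 1) (mseq A B (aseq q))).flatten := by
        rw [ih, List.append_assoc, List.replicate_succ', List.flatten_concat]
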